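/- The tangent space at A to the set of real symmetric n × n matrices of nullity k (for A of nullity k) is {X ∈ Sym(n,ℝ) : vᵀ X w = 0 for all v, w ∈ ker A}, which has codimension k(k+1)/2 in Sym(n,ℝ). -/

import Mathlib

/-!
Fix an orthonormal basis of `ker A`, arranged as the columns of an `n × k` matrix `B`, so that
`BᵀB = 1`, `AB = 0`, and `BBᵀ` is the orthogonal projection onto `ker A`. The vanishing of the
form `X` on `ker A` then reads `BᵀXB = 0`, and `G = A + BBᵀ` is invertible with `GB = B`.

*Tangent vectors satisfy the equation.* Let `A'` be a matrix of nullity `k` close to `A`. Then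
`G' = A' + BBᵀ` is still invertible and agrees with `BBᵀ` on `ker A'`. Hence `Bᵀ` is
injective on `ker A'`, and by equality of dimensions it is onto `ℝᵏ`. Consequently
`A' G'⁻¹ B = 0`, and so `Bᵀ (A' - A) G'⁻¹ B = 0`. Scaling and passing to the limit gives
`BᵀXB = Bᵀ X G⁻¹ B = 0`. The adjugate replaces the inverse, as it is continuous everywhere.

*Solutions are tangent.* If `X` is symmetric and `BᵀXB = 0`, then
`Y = ½ G⁻¹ (X + X BBᵀ)` solves `AY + YᵀA = X`. The curve `(1 + tY)ᵀ A (1 + tY)` consists of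
symmetric matrices congruent to `A` for small `t`, hence of the same nullity, and its velocity at
`t = 0` is `X`.

*Codimension.* The tangent space is the kernel of the linear map `X ↦ BᵀXB` from symmetric
`n × n` to symmetric `k × k` matrices, which is onto because `Z = Bᵀ(BZBᵀ)B`. The symmetric
`k × k` matrices are the functions on unordered pairs, a space of dimension `k(k+1)/2`.
-/

open Module

/-- The kernel of a square array `A`, viewed as a set of vectors. -/
def kerSet (n : ℕ) (A : Fin n → Fin n → ℝ) : Set (Fin n → ℝ) :=
  {v | ∀ i, ∑ j, A i j * v j = 0}

open Matrix Filter Topology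

/-! ### Nullity and an orthonormal basis of the kernel -/

lemma mem_kerSet_iff {n : ℕ} (A : Matrix (Fin n) (Fin n) ℝ) (v : Fin n → ℝ) :
    v ∈ kerSet n A ↔ A *ᵥ v = 0 := by
  rw [funext_iff]; rfl

lemma kerSet_eq {n : ℕ} (A : Matrix (Fin n) (Fin n) ℝ) :
    kerSet n A = (LinearMap.ker A.mulVecLin : Set (Fin n → ℝ)) := by
  ext v
  rw [mem_kerSet_iff]; simp

lemma finrank_kerSet {n : ℕ} (A : Matrix (Fin n) (Fin n) ℝ) :
    Set.finrank ℝ (kerSet n A) = finrank ℝ (LinearMap.ker A.mulVecLin) := by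
  rw [kerSet_eq, Set.finrank, Submodule.span_eq]

lemma finrank_kerSet_add_rank {n : ℕ} (A : Matrix (Fin n) (Fin n) ℝ) :
    Set.finrank ℝ (kerSet n A) + A.rank = n := by
  rw [finrank_kerSet, Matrix.rank, add_comm, LinearMap.finrank_range_add_finrank_ker]
  simp

/-- An orthonormal basis of `ker A`, as the columns of a matrix. -/
lemma exists_orthonormal_ker {n k : ℕ} (A : Matrix (Fin n) (Fin n) ℝ)
    (hk : Set.finrank ℝ (kerSet n A) = k) :
    ∃ B : Matrix (Fin n) (Fin k) ℝ, Bᵀ * B = 1 ∧ A * B = 0 ∧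
      ∀ v, A *ᵥ v = 0 → B *ᵥ (Bᵀ *ᵥ v) = v := by
  let e := (WithLp.linearEquiv 2 ℝ (Fin n → ℝ)).symm
  let K : Submodule ℝ (EuclideanSpace ℝ (Fin n)) :=
    (LinearMap.ker A.mulVecLin).map (e : (Fin n → ℝ) →ₗ[ℝ] EuclideanSpace ℝ (Fin n))
  have hK : finrank ℝ K = k := by
    rw [← hk, finrank_kerSet]
    exact LinearEquiv.finrank_map_eq e _
  have hmem : ∀ x : EuclideanSpace ℝ (Fin n), x ∈ K ↔ A *ᵥ x.ofLp = 0 := by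
    intro x
    simp only [K, Submodule.mem_map, LinearMap.mem_ker, Matrix.mulVecLin_apply]
    constructor
    · rintro ⟨y, hy, rfl⟩
      exact hy
    · intro h
      exact ⟨x.ofLp, h, rfl⟩
  let b := (stdOrthonormalBasis ℝ K).reindex (finCongr hK)
  refine ⟨Matrix.of fun i j => (b j : EuclideanSpace ℝ (Fin n)).ofLp i, ?_, ?_, ?_⟩
  · ext i j
    have := orthonormal_iff_ite.1 b.orthonormal i j
    rw [Submodule.coe_inner, PiLp.inner_apply] at this
    rw [Matrix.one_apply, ← this, Matrix.mul_apply]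
    refine Finset.sum_congr rfl fun l _ => ?_
    simp [mul_comm]
  · ext i j
    exact congrFun ((hmem _).1 (b j).2) i
  · intro v hv
    let x : K := ⟨WithLp.toLp 2 v, (hmem _).2 hv⟩
    have h := congrArg (fun y : K => (y : EuclideanSpace ℝ (Fin n)).ofLp) (b.sum_repr x)
    ext i
    have hi := congrFun h i
    simp only [Submodule.coe_sum, WithLp.ofLp_sum, Finset.sum_apply, Submodule.coe_smul,
      PiLp.smul_apply, smul_eq_mul, b.repr_apply_apply] at hi
    refine Eq.trans ?_ hi
    rw [Matrix.mulVec, dotProduct]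
    refine Finset.sum_congr rfl fun j _ => ?_
    rw [Submodule.coe_inner, PiLp.inner_apply, mul_comm]
    simp [Matrix.mulVec, dotProduct, x, mul_comm]

section

variable {n k : ℕ} {A : Matrix (Fin n) (Fin n) ℝ} {B : Matrix (Fin n) (Fin k) ℝ}

/-- Vanishing of the form `X` on `ker A`, expressed in the basis given by the columns of `B`. -/
lemma form_vanishes_iff (hAB : A * B = 0)
    (hB : ∀ v, A *ᵥ v = 0 → B *ᵥ (Bᵀ *ᵥ v) = v) (X : Matrix (Fin n) (Fin n) ℝ) :
    (∀ v ∈ kerSet n A, ∀ w ∈ kerSet n A, ∑ i, ∑ j, v i * X i j * w j = 0) ↔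
      Bᵀ * X * B = 0 := by
  have key : ∀ v w : Fin n → ℝ, ∑ i, ∑ j, v i * X i j * w j = v ⬝ᵥ (X *ᵥ w) := by
    intro v w
    simp only [dotProduct, mulVec, Finset.mul_sum, mul_assoc]
  constructor
  · intro h
    have hcol : ∀ j, (fun i => B i j) ∈ kerSet n A := fun j =>
      (mem_kerSet_iff A _).2 (funext fun i => congrFun (congrFun hAB i) j)
    ext a b
    have := h _ (hcol a) _ (hcol b)
    rw [key] at this
    rw [Matrix.mul_assoc]
    exact this
  · intro h v hv w hw
    rw [mem_kerSet_iff] at hv hw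
    rw [key, ← hB v hv, ← hB w hw, ← Matrix.vecMul_transpose, ← Matrix.dotProduct_mulVec,
      Matrix.mulVec_mulVec, Matrix.mulVec_mulVec, h]
    simp

lemma isUnit_det_add (hA : Aᵀ = A) (hBB : Bᵀ * B = 1) (hAB : A * B = 0)
    (hB : ∀ v, A *ᵥ v = 0 → B *ᵥ (Bᵀ *ᵥ v) = v) : IsUnit (A + B * Bᵀ).det := by
  rw [isUnit_iff_ne_zero]
  intro h0
  obtain ⟨v, hv0, hv⟩ := Matrix.exists_mulVec_eq_zero_iff.2 h0
  have hBA : Bᵀ * A = 0 := by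
    have := congrArg Matrix.transpose hAB
    simpa [Matrix.transpose_mul, hA] using this
  have h1 : Bᵀ *ᵥ v = 0 := by
    have := congrArg (fun u => Bᵀ *ᵥ u) hv
    simpa [Matrix.mulVec_mulVec, Matrix.mul_add, hBA, ← Matrix.mul_assoc, hBB] using this
  have h2 : A *ᵥ v = 0 := by
    simpa [Matrix.add_mulVec, ← Matrix.mulVec_mulVec, h1] using hv
  apply hv0
  rw [← hB v h2, h1, Matrix.mulVec_zero]

/-! ### Equations satisfied by tangent vectors -/

/-- If `M` has nullity `k` and `M + BBᵀ` is invertible, then `(M + BBᵀ)⁻¹ B` maps into `ker M`: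
on `ker M` the matrix `M + BBᵀ` acts as `BBᵀ`, so `Bᵀ` is injective there, hence onto `ℝᵏ`. -/
lemma mul_adjugate_mul_eq_zero (M : Matrix (Fin n) (Fin n) ℝ) (B : Matrix (Fin n) (Fin k) ℝ)
    (hM : Set.finrank ℝ (kerSet n M) = k) (hdet : (M + B * Bᵀ).det ≠ 0) :
    M * ((M + B * Bᵀ).adjugate * B) = 0 := by
  let f : LinearMap.ker M.mulVecLin →ₗ[ℝ] (Fin k → ℝ) := Bᵀ.mulVecLin.domRestrict _
  have hGx : ∀ x : LinearMap.ker M.mulVecLin, (M + B * Bᵀ) *ᵥ (x : Fin n → ℝ) = B *ᵥ f x := by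
    intro x
    have hx : M *ᵥ (x : Fin n → ℝ) = 0 := x.2
    rw [Matrix.add_mulVec, hx, zero_add, ← Matrix.mulVec_mulVec]
    rfl
  have hinj : Function.Injective f := by
    rw [← LinearMap.ker_eq_bot, LinearMap.ker_eq_bot']
    intro x hx
    have h := hGx x
    rw [hx, Matrix.mulVec_zero] at h
    exact Subtype.ext (Matrix.eq_zero_of_mulVec_eq_zero hdet h)
  have hsurj : Function.Surjective f :=
    (LinearMap.injective_iff_surjective_of_finrank_eq_finrank
      (by rw [← finrank_kerSet, hM]; simp)).1 hinj
  refine Matrix.ext_of_mulVec_single fun j => ?_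
  obtain ⟨x, hx⟩ := hsurj (Pi.single j 1)
  have hx' : M *ᵥ (x : Fin n → ℝ) = 0 := x.2
  rw [← Matrix.mulVec_mulVec, ← Matrix.mulVec_mulVec, ← hx, ← hGx,
    Matrix.mulVec_mulVec _ _ (M + B * Bᵀ), Matrix.adjugate_mul, Matrix.smul_mulVec, Matrix.one_mulVec, Matrix.mulVec_smul, hx']
  simp

lemma tendsto_mul_adjugate_mul {ι : Type*} {l : Filter ι} (B : Matrix (Fin n) (Fin k) ℝ)
    {u v : ι → Matrix (Fin n) (Fin n) ℝ} {X M : Matrix (Fin n) (Fin n) ℝ}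
    (hu : Tendsto u l (𝓝 X)) (hv : Tendsto v l (𝓝 M)) :
    Tendsto (fun i => Bᵀ * u i * ((v i + B * Bᵀ).adjugate * B)) l
      (𝓝 (Bᵀ * X * ((M + B * Bᵀ).adjugate * B))) := by
  have hc : Continuous fun p : Matrix (Fin n) (Fin n) ℝ × Matrix (Fin n) (Fin n) ℝ =>
      Bᵀ * p.1 * ((p.2 + B * Bᵀ).adjugate * B) :=
    (continuous_const.matrix_mul continuous_fst).matrix_mul
      ((continuous_snd.add continuous_const).matrix_adjugate.matrix_mul continuous_const)
  have h := (hc.tendsto (X, M)).comp (hu.prodMk_nhds hv)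
  simpa only [Function.comp_def] using h

/-- Tangent vectors at `A` to the stratum are symmetric and vanish as forms on `ker A`. -/
lemma of_mem_tangentCone (hA : Aᵀ = A) (hBB : Bᵀ * B = 1) (hAB : A * B = 0)
    (hB : ∀ v, A *ᵥ v = 0 → B *ᵥ (Bᵀ *ᵥ v) = v) (X : Matrix (Fin n) (Fin n) ℝ)
    (hX : X ∈ tangentConeAt ℝ
      {M : Matrix (Fin n) (Fin n) ℝ | Mᵀ = M ∧ Set.finrank ℝ (kerSet n M) = k} A) :
    Xᵀ = X ∧ Bᵀ * X * B = 0 := by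
  obtain ⟨ι, l, hl, c, d, hd0, hds, hcd⟩ := exists_fun_of_mem_tangentConeAt hX
  have hu := isUnit_det_add hA hBB hAB hB
  constructor
  · have h1 : Tendsto (fun i => (c i • d i)ᵀ) l (𝓝 Xᵀ) :=
      ((continuous_id.matrix_transpose).tendsto X).comp hcd
    refine tendsto_nhds_unique (h1.congr' ?_) hcd
    filter_upwards [hds] with i hi
    have := hi.1
    rw [Matrix.transpose_add, hA, add_right_inj] at this
    rw [Matrix.transpose_smul, this]
  · have hBA : Bᵀ * A = 0 := by
      simpa [Matrix.transpose_mul, hA] using congrArg Matrix.transpose hAB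
    have hAd : Tendsto (fun i => A + d i) l (𝓝 A) := by
      simpa using hd0.const_add A
    have hdet : ∀ᶠ i in l, (A + d i + B * Bᵀ).det ≠ 0 := by
      have hc : Continuous fun M : Matrix (Fin n) (Fin n) ℝ => (M + B * Bᵀ).det := by fun_prop
      exact hAd.eventually (hc.continuousAt.eventually_ne hu.ne_zero)
    have hlim : Tendsto (fun i => Bᵀ * (c i • d i) * ((A + d i + B * Bᵀ).adjugate * B)) l
        (𝓝 (Bᵀ * X * ((A + B * Bᵀ).adjugate * B))) :=
      tendsto_mul_adjugate_mul B hcd hAd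
    have hzero : ∀ᶠ i in l, Bᵀ * (c i • d i) * ((A + d i + B * Bᵀ).adjugate * B) = 0 := by
      filter_upwards [hds, hdet] with i hi hi'
      have h0 := mul_adjugate_mul_eq_zero (A + d i) B hi.2 hi'
      have h1 : Bᵀ * d i = Bᵀ * (A + d i) := by rw [Matrix.mul_add, hBA, zero_add]
      rw [Matrix.mul_smul, Matrix.smul_mul, h1, Matrix.mul_assoc, h0]
      simp
    have h0 : Bᵀ * X * ((A + B * Bᵀ).adjugate * B) = 0 :=
      tendsto_nhds_unique (hlim.congr' hzero) tendsto_const_nhds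
    -- `(A + BBᵀ) B = B`, so the adjugate acts on `B` as the determinant.
    have hGB : (A + B * Bᵀ).adjugate * B = (A + B * Bᵀ).det • B := by
      have : (A + B * Bᵀ) * B = B := by
        rw [Matrix.add_mul, hAB, zero_add, Matrix.mul_assoc, hBB, Matrix.mul_one]
      calc (A + B * Bᵀ).adjugate * B
          = (A + B * Bᵀ).adjugate * ((A + B * Bᵀ) * B) := by rw [this]
        _ = _ := by
          rw [← Matrix.mul_assoc, Matrix.adjugate_mul, Matrix.smul_mul, Matrix.one_mul]
    rw [hGB, Matrix.mul_smul] at h0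
    exact (smul_eq_zero.1 h0).resolve_left hu.ne_zero

/-! ### Tangent vectors from congruences -/

/-- The solvability of `AY + YᵀA = X`, the derivative at `1` of the congruence action on `A`. -/
lemma exists_lift (hA : Aᵀ = A) (hBB : Bᵀ * B = 1) (hAB : A * B = 0)
    (hB : ∀ v, A *ᵥ v = 0 → B *ᵥ (Bᵀ *ᵥ v) = v) (X : Matrix (Fin n) (Fin n) ℝ)
    (hX : Xᵀ = X) (hXB : Bᵀ * X * B = 0) : ∃ Y, A * Y + Yᵀ * A = X := by
  have hu := isUnit_det_add hA hBB hAB hB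
  set P := B * Bᵀ with hP
  have hPt : Pᵀ = P := by simp [hP]
  have hPG : P * (A + P) = P := by
    have hPA : P * A = 0 := by
      have : A * P = 0 := by rw [hP, ← Matrix.mul_assoc, hAB, Matrix.zero_mul]
      simpa [Matrix.transpose_mul, hA, hPt] using congrArg Matrix.transpose this
    have hPP : P * P = P := by
      rw [hP, Matrix.mul_assoc, ← Matrix.mul_assoc Bᵀ, hBB, Matrix.one_mul]
    rw [Matrix.mul_add, hPA, hPP, zero_add]
  have hPGi : P * (A + P)⁻¹ = P := by
    have := congrArg (· * (A + P)⁻¹) hPG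
    rw [Matrix.mul_assoc, Matrix.mul_nonsing_inv _ hu, Matrix.mul_one] at this
    exact this.symm
  have hAG : A * (A + P)⁻¹ = 1 - P := by
    have := Matrix.mul_nonsing_inv _ hu
    rw [Matrix.add_mul, hPGi] at this
    exact eq_sub_of_add_eq this
  have hPXP : P * X * P = 0 := by
    have : P * X * P = B * (Bᵀ * X * B) * Bᵀ := by simp only [hP, Matrix.mul_assoc]
    rw [this, hXB]; simp
  have hAY : A * ((A + P)⁻¹ * ((1 / 2 : ℝ) • (X + X * P)))
      = (1 / 2 : ℝ) • (X + X * P - P * X) := by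
    rw [← Matrix.mul_assoc, hAG, Matrix.mul_smul, Matrix.sub_mul, Matrix.one_mul, Matrix.mul_add,
      ← Matrix.mul_assoc P X P, hPXP, add_zero]
  refine ⟨(A + P)⁻¹ * ((1 / 2 : ℝ) • (X + X * P)), ?_⟩
  have hYA := congrArg Matrix.transpose hAY
  rw [Matrix.transpose_mul, hA] at hYA
  rw [hAY, hYA]
  simp only [Matrix.transpose_smul, Matrix.transpose_add, Matrix.transpose_sub,
    Matrix.transpose_mul, hX, hPt]
  module

lemma finrank_kerSet_congruence (M : Matrix (Fin n) (Fin n) ℝ) (hM : M.det ≠ 0) :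
    Set.finrank ℝ (kerSet n (Mᵀ * A * M)) = Set.finrank ℝ (kerSet n A) := by
  have hr : (Mᵀ * A * M).rank = A.rank := by
    rw [Matrix.rank_mul_eq_left_of_isUnit_det _ _ (isUnit_iff_ne_zero.2 hM),
      Matrix.rank_mul_eq_right_of_isUnit_det _ _ (by simpa using hM)]
  have h1 := finrank_kerSet_add_rank A
  have h2 := finrank_kerSet_add_rank (Mᵀ * A * M)
  omega

/-- The velocity at `t = 0` of the curve `(1 + tY)ᵀ A (1 + tY)`, which stays in the stratum. -/
lemma mem_tangentCone_of_lift (hA : Aᵀ = A) (hk : Set.finrank ℝ (kerSet n A) = k)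
    (Y : Matrix (Fin n) (Fin n) ℝ) :
    A * Y + Yᵀ * A ∈ tangentConeAt ℝ
      {M : Matrix (Fin n) (Fin n) ℝ | Mᵀ = M ∧ Set.finrank ℝ (kerSet n M) = k} A := by
  have hdet : ∀ᶠ t : ℝ in 𝓝[≠] 0, (1 + t • Y).det ≠ 0 := by
    have hc : Continuous fun t : ℝ => (1 + t • Y).det := by fun_prop
    exact (hc.continuousAt.eventually_ne (by simp)).filter_mono nhdsWithin_le_nhds
  have hexp : ∀ t : ℝ, (1 + t • Y)ᵀ * A * (1 + t • Y)
      = A + (t • (A * Y + Yᵀ * A) + t ^ 2 • (Yᵀ * A * Y)) := by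
    intro t
    simp only [Matrix.transpose_add, Matrix.transpose_one, Matrix.transpose_smul, Matrix.add_mul,
      Matrix.mul_add, Matrix.one_mul, Matrix.mul_one, Matrix.smul_mul, Matrix.mul_smul]
    module
  refine mem_tangentConeAt_of_seq (𝓝[≠] (0 : ℝ)) (fun t => t⁻¹)
    (fun t => t • (A * Y + Yᵀ * A) + t ^ 2 • (Yᵀ * A * Y)) ?_ ?_ ?_
  · have hc : Continuous fun t : ℝ => t • (A * Y + Yᵀ * A) + t ^ 2 • (Yᵀ * A * Y) := by fun_prop
    have := hc.tendsto 0
    simp only [zero_smul, ne_eq, OfNat.ofNat_ne_zero, not_false_eq_true, zero_pow, add_zero] at this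
    exact this.mono_left nhdsWithin_le_nhds
  · filter_upwards [hdet] with t ht
    rw [← hexp]
    refine ⟨?_, (finrank_kerSet_congruence _ ht).trans hk⟩
    simp [Matrix.transpose_mul, hA, Matrix.mul_assoc]
  · have hc : Continuous fun t : ℝ => (A * Y + Yᵀ * A) + t • (Yᵀ * A * Y) := by fun_prop
    have := (hc.tendsto 0).mono_left (nhdsWithin_le_nhds (s := {0}ᶜ))
    simp only [zero_smul, add_zero] at this
    refine this.congr' ?_
    filter_upwards [self_mem_nhdsWithin] with t (ht : t ≠ 0)
    rw [smul_add, smul_smul, smul_smul, inv_mul_cancel₀ ht, one_smul]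
    congr 2
    field_simp

end

/-! ### Codimension -/

/-- The space of symmetric real `n × n` matrices. -/
def symMat (n : ℕ) : Submodule ℝ (Matrix (Fin n) (Fin n) ℝ) where
  carrier := {X | Xᵀ = X}
  add_mem' {X Y} hX hY := by
    change (X + Y)ᵀ = X + Y
    rw [Matrix.transpose_add, show Xᵀ = X from hX, show Yᵀ = Y from hY]
  zero_mem' := Matrix.transpose_zero
  smul_mem' c X hX := by
    change (c • X)ᵀ = c • X
    rw [Matrix.transpose_smul, show Xᵀ = X from hX]

/-- Symmetric matrices are functions on unordered pairs of indices. -/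
lemma finrank_symMat (k : ℕ) : finrank ℝ (symMat k) = k * (k + 1) / 2 := by
  let e : symMat k ≃ₗ[ℝ] (Sym2 (Fin k) → ℝ) :=
    { toFun := fun X => Sym2.lift ⟨fun i j => X.1 i j, fun i j => congrFun (congrFun X.2 j) i⟩
      map_add' := fun X Y => by ext p; induction p; rfl
      map_smul' := fun c X => by ext p; induction p; rfl
      invFun := fun f => ⟨Matrix.of fun i j => f s(i, j), by
        ext i j
        exact congrArg f Sym2.eq_swap⟩
      left_inv := fun X => by ext i j; rfl
      right_inv := fun f => by ext p; induction p; rfl }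
  rw [e.finrank_eq, Module.finrank_fintype_fun_eq_card, Sym2.card, Fintype.card_fin,
    Nat.choose_two_right, Nat.add_sub_cancel, mul_comm]

/-- The symmetric matrices `X` with `BᵀXB = 0`. -/
def symMatVanish {n k : ℕ} (B : Matrix (Fin n) (Fin k) ℝ) :
    Submodule ℝ (Matrix (Fin n) (Fin n) ℝ) where
  carrier := {X | Xᵀ = X ∧ Bᵀ * X * B = 0}
  add_mem' {X Y} hX hY :=
    ⟨(symMat n).add_mem hX.1 hY.1, by rw [Matrix.mul_add, Matrix.add_mul, hX.2, hY.2, add_zero]⟩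
  zero_mem' := ⟨Matrix.transpose_zero, by simp⟩
  smul_mem' c X hX :=
    ⟨(symMat n).smul_mem c hX.1, by rw [Matrix.mul_smul, Matrix.smul_mul, hX.2, smul_zero]⟩

/-- Rank–nullity for the surjection `X ↦ BᵀXB` from symmetric `n × n` to symmetric `k × k`
matrices. -/
lemma finrank_symMatVanish {n k : ℕ} (B : Matrix (Fin n) (Fin k) ℝ) (hBB : Bᵀ * B = 1) :
    finrank ℝ (symMat k) + finrank ℝ (symMatVanish B) = finrank ℝ (symMat n) := by
  let f : symMat n →ₗ[ℝ] symMat k :=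
    { toFun := fun X => ⟨Bᵀ * X.1 * B, by
        change (Bᵀ * X.1 * B)ᵀ = Bᵀ * X.1 * B
        rw [Matrix.transpose_mul, Matrix.transpose_mul, Matrix.transpose_transpose,
          show X.1ᵀ = X.1 from X.2, Matrix.mul_assoc]⟩
      map_add' := fun X Y => Subtype.ext (by simp [Matrix.mul_add, Matrix.add_mul])
      map_smul' := fun c X => Subtype.ext (by simp) }
  have hsurj : LinearMap.range f = ⊤ := by
    rw [LinearMap.range_eq_top]
    intro Z
    refine ⟨⟨B * Z.1 * Bᵀ, ?_⟩, Subtype.ext ?_⟩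
    · change (B * Z.1 * Bᵀ)ᵀ = B * Z.1 * Bᵀ
      rw [Matrix.transpose_mul, Matrix.transpose_mul, Matrix.transpose_transpose,
        show Z.1ᵀ = Z.1 from Z.2, Matrix.mul_assoc]
    · change Bᵀ * (B * Z.1 * Bᵀ) * B = Z.1
      rw [Matrix.mul_assoc, Matrix.mul_assoc (B * Z.1), hBB, Matrix.mul_one, ← Matrix.mul_assoc,
        hBB, Matrix.one_mul]
  have hker : (LinearMap.ker f).map (symMat n).subtype = symMatVanish B := by
    ext X
    simp only [Submodule.mem_map, LinearMap.mem_ker]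
    constructor
    · rintro ⟨x, hx, rfl⟩
      exact ⟨x.2, congrArg Subtype.val hx⟩
    · intro hX
      exact ⟨⟨X, hX.1⟩, Subtype.ext hX.2, rfl⟩
  have h := f.finrank_range_add_finrank_ker
  rw [hsurj, finrank_top] at h
  rw [← hker, ← h]
  congr 1
  exact LinearEquiv.finrank_eq (Submodule.equivMapOfInjective _ (Submodule.subtype_injective _) _).symm

/-- The tangent space at `A` to the set of symmetric matrices of nullity `k`: the set of
symmetric matrices of nullity `k` is a smooth submanifold near each of its points (its
tangent cone at `A` is the linear space `{X symmetric : vᵀ X w = 0 for v, w ∈ ker A}`),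
and this tangent space has codimension `k(k+1)/2` in the space of symmetric matrices. -/
theorem tangent_space_nullity_stratum (n k : ℕ)
    (A : Fin n → Fin n → ℝ) (hA : ∀ i j, A i j = A j i)
    (hk : Set.finrank ℝ (kerSet n A) = k) :
    tangentConeAt ℝ
        {A' : Fin n → Fin n → ℝ | (∀ i j, A' i j = A' j i) ∧ Set.finrank ℝ (kerSet n A') = k} A =
      {X : Fin n → Fin n → ℝ | (∀ i j, X i j = X j i) ∧
        ∀ v ∈ kerSet n A, ∀ w ∈ kerSet n A, ∑ i, ∑ j, v i * X i j * w j = 0} ∧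
    Set.finrank ℝ {X : Fin n → Fin n → ℝ | ∀ i j, X i j = X j i} -
        Set.finrank ℝ {X : Fin n → Fin n → ℝ | (∀ i j, X i j = X j i) ∧
          ∀ v ∈ kerSet n A, ∀ w ∈ kerSet n A, ∑ i, ∑ j, v i * X i j * w j = 0} =
      k * (k + 1) / 2 := by
  have hsym : ∀ M : Matrix (Fin n) (Fin n) ℝ, (∀ i j, M i j = M j i) ↔ Mᵀ = M := fun M =>
    ⟨fun h => Matrix.ext fun i j => h j i, fun h i j => congrFun (congrFun h j) i⟩
  have hAt : (A : Matrix (Fin n) (Fin n) ℝ)ᵀ = A := (hsym A).1 hA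
  obtain ⟨B, hBB, hAB, hB⟩ := exists_orthonormal_ker (A : Matrix (Fin n) (Fin n) ℝ) hk
  have hS : {A' : Fin n → Fin n → ℝ | (∀ i j, A' i j = A' j i) ∧ Set.finrank ℝ (kerSet n A') = k}
      = {M : Matrix (Fin n) (Fin n) ℝ | Mᵀ = M ∧ Set.finrank ℝ (kerSet n M) = k} :=
    Set.ext fun M => and_congr_left' (hsym M)
  have hT : {X : Fin n → Fin n → ℝ | (∀ i j, X i j = X j i) ∧
        ∀ v ∈ kerSet n A, ∀ w ∈ kerSet n A, ∑ i, ∑ j, v i * X i j * w j = 0}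
      = (symMatVanish B : Set (Matrix (Fin n) (Fin n) ℝ)) :=
    Set.ext fun X => and_congr (hsym X) (form_vanishes_iff hAB hB X)
  have hSym : {X : Fin n → Fin n → ℝ | ∀ i j, X i j = X j i}
      = (symMat n : Set (Matrix (Fin n) (Fin n) ℝ)) := Set.ext hsym
  rw [hT, hS, hSym]
  constructor
  · ext X
    constructor
    · exact of_mem_tangentCone hAt hBB hAB hB X
    · intro hX
      obtain ⟨Y, hY⟩ := exists_lift hAt hBB hAB hB X hX.1 hX.2
      have := mem_tangentCone_of_lift hAt hk Y
      rw [hY] at this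
      exact this
  · have h1 : Set.finrank ℝ (symMat n : Set (Matrix (Fin n) (Fin n) ℝ)) = finrank ℝ (symMat n) := by
      rw [Set.finrank, Submodule.span_eq]
    have h2 : Set.finrank ℝ (symMatVanish B : Set (Matrix (Fin n) (Fin n) ℝ))
        = finrank ℝ (symMatVanish B) := by
      rw [Set.finrank, Submodule.span_eq]
    have h3 := finrank_symMatVanish B hBB
    rw [← finrank_symMat k]
    refine (congrArg₂ (· - ·) h1 h2).trans ?_
    omega
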